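/- arXiv:2102.10707 — 3 statements merged into one kernel-verified Lean document; each statement's English description precedes it below -/
import Mathlib

section
/- Fix positive integers d, J, s with J dividing d and s ≤ d, and fix a partition of the coordinate set {1,…,d} into J blocks B₁,…,B_J, each of size d/J. Let g ∈ ℝ^d be a fixed vector with at most s nonzero entries. Let π be a permutation of {1,…,d} chosen uniformly at random, and for each j let Y_j denote the number of indices i with g_i ≠ 0 and π(i) ∈ B_j. Then for any Δ with 0 < Δ ≤ 1, with probability at least 1 − 2J·exp(−Δ²s/(3J)) over the choice of π, one has Y_j ≤ (1+Δ)s/J simultaneously for all j ∈ {1,…,J}. -/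
open scoped Classical

/-- The permutations that send `T` into `B`. -/
noncomputable def goodPerms {d : ℕ} (B T : Finset (Fin d)) : Finset (Equiv.Perm (Fin d)) :=
  Finset.univ.filter (fun π => ∀ i ∈ T, π i ∈ B)

lemma goodPerms_swap {d : ℕ} (B T : Finset (Fin d)) (a c : Fin d) (ha : a ∉ T) (hc : c ∉ T) :
    (goodPerms B (insert c T)).card = (goodPerms B (insert a T)).card := by
  have hT : ∀ i ∈ T, Equiv.swap a c i = i := by
    intro i hi
    apply Equiv.swap_apply_of_ne_of_ne
    · rintro rfl; exact ha hi
    · rintro rfl; exact hc hi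
  refine Finset.card_bij' (fun π _ => π * Equiv.swap a c) (fun π _ => π * Equiv.swap a c)
    ?_ ?_ ?_ ?_
  · intro π hπ
    simp only [goodPerms, Finset.mem_filter, Finset.mem_univ, true_and, Finset.forall_mem_insert,
      Equiv.Perm.mul_apply, Equiv.swap_apply_left] at hπ ⊢
    exact ⟨hπ.1, fun i hi => by rw [hT i hi]; exact hπ.2 i hi⟩
  · intro π hπ
    simp only [goodPerms, Finset.mem_filter, Finset.mem_univ, true_and, Finset.forall_mem_insert,
      Equiv.Perm.mul_apply, Equiv.swap_apply_right] at hπ ⊢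
    exact ⟨hπ.1, fun i hi => by rw [hT i hi]; exact hπ.2 i hi⟩
  · intro π _
    simp [mul_assoc]
  · intro π _
    simp [mul_assoc]

lemma goodPerms_insert {d : ℕ} (B T : Finset (Fin d)) (a : Fin d) (ha : a ∉ T) :
    (d - T.card) * (goodPerms B (insert a T)).card = (B.card - T.card) * (goodPerms B T).card := by
  have h1 : ∑ c ∈ Tᶜ, (goodPerms B (insert c T)).card
      = (d - T.card) * (goodPerms B (insert a T)).card := by
    rw [Finset.sum_congr rfl (fun c hc => goodPerms_swap B T a c ha (Finset.mem_compl.1 hc))]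
    simp [Finset.card_compl]
  have h2 : ∑ c ∈ Tᶜ, (goodPerms B (insert c T)).card
      = ∑ π ∈ goodPerms B T, (B.card - T.card) := by
    have : ∀ c ∈ Tᶜ, (goodPerms B (insert c T)).card
        = ∑ π ∈ goodPerms B T, if π c ∈ B then 1 else 0 := by
      intro c _
      rw [← Finset.card_filter]
      congr 1
      ext π
      simp [goodPerms, Finset.forall_mem_insert, and_comm]
    rw [Finset.sum_congr rfl this, Finset.sum_comm]
    refine Finset.sum_congr rfl fun π hπ => ?_
    rw [← Finset.card_filter]
    have hsub : T.image π ⊆ B := by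
      intro x hx
      obtain ⟨i, hi, rfl⟩ := Finset.mem_image.1 hx
      exact (Finset.mem_filter.1 hπ).2 i hi
    have himg : (Tᶜ.filter (fun c => π c ∈ B)).image π = B \ T.image π := by
      ext x
      simp only [Finset.mem_image, Finset.mem_filter, Finset.mem_compl, Finset.mem_sdiff]
      constructor
      · rintro ⟨c, ⟨h, h'⟩, rfl⟩
        refine ⟨h', ?_⟩
        rintro ⟨e, he, hee⟩
        exact h (π.injective hee ▸ he)
      · rintro ⟨h, h'⟩
        refine ⟨π.symm x, ⟨fun hh => h' ⟨_, hh, by simp⟩, by simpa using h⟩, by simp⟩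
    rw [← Finset.card_image_of_injective _ π.injective, himg, Finset.card_sdiff_of_subset hsub,
      Finset.card_image_of_injective _ π.injective]
  rw [← h1, h2]
  simp [mul_comm]

lemma goodPerms_insert_le {d J : ℕ} (B T : Finset (Fin d)) (a : Fin d)
    (ha : a ∉ T) (hB : B.card * J = d) :
    (goodPerms B (insert a T)).card * J ≤ (goodPerms B T).card := by
  have h := goodPerms_insert B T a ha
  have hlt : T.card < d := by
    have := Finset.card_lt_univ_of_notMem ha
    simpa using this
  have hJ : 0 < J := by
    rcases Nat.eq_zero_or_pos J with h0 | h0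
    · subst h0; omega
    · exact h0
  have hle : (B.card - T.card) * J ≤ d - T.card := by
    rw [Nat.sub_mul, hB]
    have : T.card ≤ T.card * J := Nat.le_mul_of_pos_right _ hJ
    omega
  have hpos : 0 < d - T.card := by omega
  refine Nat.le_of_mul_le_mul_left ?_ hpos
  calc (d - T.card) * ((goodPerms B (insert a T)).card * J)
      = ((B.card - T.card) * J) * (goodPerms B T).card := by rw [← mul_assoc, h]; ring
    _ ≤ (d - T.card) * (goodPerms B T).card := Nat.mul_le_mul_right _ hle

lemma goodPerms_le {d J : ℕ} (B : Finset (Fin d)) (hB : B.card * J = d) (T : Finset (Fin d)) :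
    (goodPerms B T).card * J ^ T.card ≤ Fintype.card (Equiv.Perm (Fin d)) := by
  induction T using Finset.induction_on with
  | empty => simpa using Finset.card_le_univ _
  | insert a T ha ih =>
    rw [Finset.card_insert_of_notMem ha, pow_succ']
    calc _ = ((goodPerms B (insert a T)).card * J) * J ^ T.card := by ring
      _ ≤ _ := (Nat.mul_le_mul_right _ (goodPerms_insert_le B T a ha hB)).trans ih

lemma sum_pow_card_eq {α : Type*} (U : Finset α) (x : ℝ) :
    ∑ T ∈ U.powerset, x ^ T.card = (1 + x) ^ U.card := by
  have := Finset.prod_add (fun _ : α => x) (fun _ => 1) U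
  simp only [Finset.prod_const, one_pow, mul_one] at this
  rw [← this, add_comm]

lemma mgf_bound {d J : ℕ} (hJ : 0 < J) (B S : Finset (Fin d)) (hB : B.card * J = d)
    (x : ℝ) (hx : 0 ≤ x) :
    ∑ π : Equiv.Perm (Fin d), (1 + x) ^ (S.filter (fun i => π i ∈ B)).card
      ≤ Fintype.card (Equiv.Perm (Fin d)) * (1 + x / J) ^ S.card := by
  have hJ' : (0 : ℝ) < J := by exact_mod_cast hJ
  have h1 : ∀ π : Equiv.Perm (Fin d), (1 + x) ^ (S.filter (fun i => π i ∈ B)).card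
      = ∑ T ∈ S.powerset, if π ∈ goodPerms B T then x ^ T.card else 0 := by
    intro π
    rw [← sum_pow_card_eq, ← Finset.sum_filter]
    refine Finset.sum_congr ?_ fun _ _ => rfl
    ext T
    simp only [goodPerms, Finset.mem_powerset, Finset.mem_filter, Finset.mem_univ, true_and]
    constructor
    · intro h
      exact ⟨h.trans (Finset.filter_subset _ _), fun i hi => (Finset.mem_filter.1 (h hi)).2⟩
    · rintro ⟨h, h'⟩ i hi
      exact Finset.mem_filter.2 ⟨h hi, h' i hi⟩
  rw [Finset.sum_congr rfl (fun π _ => h1 π), Finset.sum_comm, ← sum_pow_card_eq, Finset.mul_sum]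
  refine Finset.sum_le_sum fun T _ => ?_
  have h2 : ((goodPerms B T).card : ℝ) * (J : ℝ) ^ T.card ≤ Fintype.card (Equiv.Perm (Fin d)) := by
    exact_mod_cast goodPerms_le B hB T
  have h3 : (∑ π : Equiv.Perm (Fin d), if π ∈ goodPerms B T then x ^ T.card else 0)
      = (goodPerms B T).card * x ^ T.card := by
    rw [← Finset.sum_filter]
    simp
  rw [h3, div_pow, ← mul_div_assoc, le_div_iff₀ (by positivity)]
  calc _ = ((goodPerms B T).card : ℝ) * (J : ℝ) ^ T.card * x ^ T.card := by ring
    _ ≤ _ := mul_le_mul_of_nonneg_right h2 (by positivity)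

lemma chernoff_log (x : ℝ) (hx : 0 ≤ x) (hx1 : x ≤ 1) :
    x + x ^ 2 / 3 ≤ Real.log (1 + x) * (1 + x) := by
  have h := Real.le_log_one_add_of_nonneg hx
  have h2 : x + x ^ 2 / 3 ≤ 2 * x / (x + 2) * (1 + x) := by
    rw [div_mul_eq_mul_div, le_div_iff₀ (by positivity)]
    nlinarith [mul_nonneg (mul_nonneg hx hx) (sub_nonneg.2 hx1)]
  exact h2.trans (mul_le_mul_of_nonneg_right h (by positivity))

lemma tail_bound {d J s : ℕ} (hJ : 0 < J) (B S : Finset (Fin d)) (hB : B.card * J = d)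
    (hS : S.card ≤ s) (x : ℝ) (hx : 0 ≤ x) (hx1 : x ≤ 1) :
    ((Finset.univ.filter (fun π : Equiv.Perm (Fin d) =>
      ¬ ((S.filter (fun i => π i ∈ B)).card : ℝ) ≤ (1 + x) * s / J)).card : ℝ)
      ≤ Real.exp (-(x ^ 2 * s) / (3 * J)) * Fintype.card (Equiv.Perm (Fin d)) := by
  have hJ' : (0 : ℝ) < J := by exact_mod_cast hJ
  set bad := Finset.univ.filter (fun π : Equiv.Perm (Fin d) =>
      ¬ ((S.filter (fun i => π i ∈ B)).card : ℝ) ≤ (1 + x) * s / J) with hbad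
  set N : ℝ := (Fintype.card (Equiv.Perm (Fin d)) : ℝ)
  have hlow : (bad.card : ℝ) * Real.exp ((x + x ^ 2 / 3) * (s / J))
      ≤ ∑ π : Equiv.Perm (Fin d), (1 + x) ^ (S.filter (fun i => π i ∈ B)).card := by
    rw [← nsmul_eq_mul, ← Finset.sum_const]
    refine (Finset.sum_le_sum fun π hπ => ?_).trans
      (Finset.sum_le_sum_of_subset_of_nonneg (Finset.subset_univ bad)
        fun _ _ _ => by positivity)
    have hπ' := not_le.1 (Finset.mem_filter.1 hπ).2
    have hpos : (0 : ℝ) < 1 + x := by positivity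
    rw [← Real.rpow_natCast (1 + x), Real.rpow_def_of_pos hpos, Real.exp_le_exp]
    calc (x + x ^ 2 / 3) * (s / J) ≤ Real.log (1 + x) * (1 + x) * (s / J) :=
          mul_le_mul_of_nonneg_right (chernoff_log x hx hx1) (by positivity)
      _ = Real.log (1 + x) * ((1 + x) * s / J) := by ring
      _ ≤ _ := mul_le_mul_of_nonneg_left hπ'.le (Real.log_nonneg (by linarith))
  have hup : N * (1 + x / J) ^ S.card ≤ N * Real.exp (x * (s / J)) := by
    refine mul_le_mul_of_nonneg_left ?_ (Nat.cast_nonneg _)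
    have h1 : (1 : ℝ) ≤ 1 + x / J := by
      have : 0 ≤ x / J := by positivity
      linarith
    calc (1 + x / J) ^ S.card ≤ (1 + x / J) ^ s := pow_le_pow_right₀ h1 hS
      _ ≤ Real.exp (x / J) ^ s := by
          refine pow_le_pow_left₀ (by linarith) ?_ _
          linarith [Real.add_one_le_exp (x / J)]
      _ = _ := by rw [← Real.exp_nat_mul]; congr 1; ring
  have h := (hlow.trans (mgf_bound hJ B S hB x hx)).trans hup
  have he : Real.exp (x * (s / J))
      = Real.exp (-(x ^ 2 * s) / (3 * J)) * Real.exp ((x + x ^ 2 / 3) * (s / J)) := by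
    rw [← Real.exp_add]; congr 1; field_simp; ring
  rw [he] at h
  refine le_of_mul_le_mul_right ?_ (Real.exp_pos ((x + x ^ 2 / 3) * (s / J)))
  linarith

/-- Theorem 2 of the paper.
Fix positive integers `d, J, s` with `J ∣ d` and `s ≤ d`, a partition of the coordinates
`Fin d` into `J` blocks `B j` each of size `d / J`, and a vector `g : Fin d → ℝ` with at
most `s` nonzero entries.  For a uniformly random permutation `π` of `Fin d`, with
probability at least `1 - 2 J exp(-Δ² s / (3 J))`, the number
`Y_j = #{i : g i ≠ 0 ∧ π i ∈ B j}` satisfies `Y_j ≤ (1 + Δ) s / J` for all `j`. -/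
theorem sparse_entries_almost_equidistributed
    (d J s : ℕ) (hd : 0 < d) (hJ : 0 < J) (hs : 0 < s) (hJd : J ∣ d) (hsd : s ≤ d)
    (B : Fin J → Finset (Fin d))
    (hBsize : ∀ j, (B j).card = d / J)
    (hBdisj : ∀ j j', j ≠ j' → Disjoint (B j) (B j'))
    (hBcover : ∀ i : Fin d, ∃ j, i ∈ B j)
    (g : Fin d → ℝ)
    (hg : (Finset.univ.filter (fun i => g i ≠ 0)).card ≤ s)
    (Δ : ℝ) (hΔ : 0 < Δ) (hΔ1 : Δ ≤ 1) :
    (1 - 2 * (J : ℝ) * Real.exp (-(Δ ^ 2 * s) / (3 * J))) *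
        (Fintype.card (Equiv.Perm (Fin d)) : ℝ) ≤
      ((Finset.univ.filter (fun π : Equiv.Perm (Fin d) =>
          ∀ j : Fin J,
            ((Finset.univ.filter (fun i : Fin d => g i ≠ 0 ∧ π i ∈ B j)).card : ℝ) ≤
              (1 + Δ) * s / J)).card : ℝ) := by
  set S := Finset.univ.filter (fun i => g i ≠ 0) with hSdef
  have hfil : ∀ (π : Equiv.Perm (Fin d)) (j : Fin J),
      Finset.univ.filter (fun i : Fin d => g i ≠ 0 ∧ π i ∈ B j) = S.filter (fun i => π i ∈ B j) := by
    intro π j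
    rw [hSdef, Finset.filter_filter]
  simp only [hfil]
  set good := Finset.univ.filter (fun π : Equiv.Perm (Fin d) => ∀ j : Fin J,
    ((S.filter (fun i => π i ∈ B j)).card : ℝ) ≤ (1 + Δ) * s / J)
  set N := Fintype.card (Equiv.Perm (Fin d)) with hN
  set bad : Fin J → Finset (Equiv.Perm (Fin d)) := fun j => Finset.univ.filter (fun π =>
    ¬ ((S.filter (fun i => π i ∈ B j)).card : ℝ) ≤ (1 + Δ) * s / J) with hbad
  set E := Real.exp (-(Δ ^ 2 * s) / (3 * J))
  have hb : ∀ j, ((bad j).card : ℝ) ≤ E * N := fun j =>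
    tail_bound hJ (B j) S (by rw [hBsize j]; exact Nat.div_mul_cancel hJd) hg Δ hΔ.le hΔ1
  have hcov : (Finset.univ : Finset (Equiv.Perm (Fin d))) ⊆ good ∪ Finset.univ.biUnion bad := by
    intro π _
    by_cases h : π ∈ good
    · exact Finset.mem_union_left _ h
    · refine Finset.mem_union_right _ ?_
      simp only [good, Finset.mem_filter, Finset.mem_univ, true_and, not_forall] at h
      obtain ⟨j, hj⟩ := h
      exact Finset.mem_biUnion.2 ⟨j, Finset.mem_univ _, Finset.mem_filter.2 ⟨Finset.mem_univ _, hj⟩⟩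
  have hc : N ≤ good.card + ∑ j, (bad j).card :=
    (Finset.card_le_card hcov).trans ((Finset.card_union_le _ _).trans
      (Nat.add_le_add_left Finset.card_biUnion_le _))
  have hc' : (N : ℝ) ≤ good.card + ∑ j, ((bad j).card : ℝ) := by exact_mod_cast hc
  have hsum : ∑ j, ((bad j).card : ℝ) ≤ J * (E * N) := by
    refine (Finset.sum_le_sum fun j _ => hb j).trans ?_
    simp
  have hnn : 0 ≤ (J : ℝ) * (E * N) := by positivity
  linarith
end

section
/- Let f : ℝ^n → ℝ be twice continuously differentiable with Σ_{i,k} |∂²f/∂x_i∂x_k(y)| ≤ H for all y ∈ ℝ^n, where H > 0. Let E_f : ℝ^n → ℝ be any function (a noisy oracle) satisfying |E_f(y) − f(y)| ≤ σ for all y ∈ ℝ^n, where σ > 0. Set the query radius δ = 2√(σ/H). Then for every x ∈ ℝ^n and every sign vector z ∈ {−1, +1}^n, one has |(E_f(x + δz) − E_f(x))/δ − ⟨z, ∇f(x)⟩| ≤ 2√(σH). -/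
open scoped RealInnerProductSpace

/-- noisy finite-difference directional-derivative bound with the optimal
query radius `δ = 2√(σ/H)`.
Let `f : ℝⁿ → ℝ` be twice continuously differentiable with element-wise ℓ₁-norm of the
Hessian bounded by `H > 0` everywhere, and let `E_f` be a noisy oracle with
`|E_f y - f y| ≤ σ` for all `y`, `σ > 0`.  Then for every `x` and sign vector
`z ∈ {-1, +1}ⁿ`, with `δ = 2√(σ/H)`,
`|(E_f(x + δ z) - E_f x)/δ - ⟨z, ∇f(x)⟩| ≤ 2√(σ H)`. -/
theorem noisy_finite_difference_bound
    (n : ℕ) (f Ef : EuclideanSpace ℝ (Fin n) → ℝ) (H σ : ℝ) (hH : 0 < H) (hσ : 0 < σ)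
    (hf : ContDiff ℝ 2 f)
    (hHess : ∀ y : EuclideanSpace ℝ (Fin n),
      ∑ i : Fin n, ∑ k : Fin n,
        |iteratedFDeriv ℝ 2 f y ![EuclideanSpace.single i 1, EuclideanSpace.single k 1]| ≤ H)
    (hnoise : ∀ y, |Ef y - f y| ≤ σ)
    (δ : ℝ) (hδ : δ = 2 * Real.sqrt (σ / H))
    (x z : EuclideanSpace ℝ (Fin n)) (hz : ∀ i, z i = 1 ∨ z i = -1) :
    |(Ef (x + δ • z) - Ef x) / δ - ⟪z, gradient f x⟫| ≤ 2 * Real.sqrt (σ * H) := by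
  have hd1 : Differentiable ℝ f := hf.differentiable (by norm_num)
  have hd2 : Differentiable ℝ (fderiv ℝ f) :=
    (hf.fderiv_right (m := 1) (by norm_num)).differentiable (by norm_num)
  have hzs : z = ∑ i : Fin n, z i • (EuclideanSpace.single i 1 : EuclideanSpace ℝ (Fin n)) := by
    ext j
    simp [Finset.sum_apply, Pi.single_apply]
  have habs : ∀ i, |z i| = 1 := by
    intro i
    rcases hz i with h | h <;> simp [h]
  have hquad : ∀ y, |fderiv ℝ (fderiv ℝ f) y z z| ≤ H := by
    intro y
    refine le_trans ?_ (hHess y)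
    have h1 : fderiv ℝ (fderiv ℝ f) y z z = ∑ i : Fin n, ∑ k : Fin n, z i * (z k *
        iteratedFDeriv ℝ 2 f y ![EuclideanSpace.single i 1, EuclideanSpace.single k 1]) := by
      simp only [iteratedFDeriv_two_apply, Matrix.cons_val_zero, Matrix.cons_val_one]
      generalize fderiv ℝ (fderiv ℝ f) y = B
      conv_lhs => rw [hzs]
      simp only [map_sum, map_smul, ContinuousLinearMap.sum_apply, ContinuousLinearMap.smul_apply,
        smul_eq_mul, Finset.mul_sum]
      rw [Finset.sum_comm]
      refine Finset.sum_congr rfl fun i _ => Finset.sum_congr rfl fun k _ => ?_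
      ring
    rw [h1]
    refine (Finset.abs_sum_le_sum_abs _ _).trans (Finset.sum_le_sum fun i _ => ?_)
    refine (Finset.abs_sum_le_sum_abs _ _).trans (Finset.sum_le_sum fun k _ => ?_)
    rw [abs_mul, abs_mul, habs, habs, one_mul, one_mul]
  have hline : ∀ t : ℝ, HasDerivAt (fun t : ℝ => x + t • z) z t := by
    intro t
    simpa using ((hasDerivAt_id t).smul_const z).const_add x
  have hp1 : ∀ t : ℝ, HasDerivAt (fun t : ℝ => f (x + t • z)) (fderiv ℝ f (x + t • z) z) t :=
    fun t => (hd1 _).hasFDerivAt.comp_hasDerivAt t (hline t)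
  have hp2 : ∀ t : ℝ, HasDerivAt (fun t : ℝ => fderiv ℝ f (x + t • z) z)
      (fderiv ℝ (fderiv ℝ f) (x + t • z) z z) t := by
    intro t
    have h := (hd2 (x + t • z)).hasFDerivAt.comp_hasDerivAt t (hline t)
    simpa using h.clm_apply (hasDerivAt_const t z)
  have hlip : ∀ t : ℝ, 0 ≤ t → |fderiv ℝ f (x + t • z) z - fderiv ℝ f x z| ≤ H * t := by
    intro t ht
    have := Convex.norm_image_sub_le_of_norm_hasDerivWithin_le (s := Set.univ) (x := 0) (y := t)
      (C := H) (fun s _ => (hp2 s).hasDerivWithinAt) (fun s _ => hquad _) convex_univ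
      (Set.mem_univ _) (Set.mem_univ _)
    simpa [abs_of_nonneg ht] using this
  have hδ0 : 0 < δ := by rw [hδ]; positivity
  have hT : |f (x + δ • z) - f x - δ * fderiv ℝ f x z| ≤ H * δ ^ 2 / 2 := by
    have hg : ∀ t : ℝ, HasDerivAt (fun t : ℝ => f (x + t • z) - f x - t * fderiv ℝ f x z)
        (fderiv ℝ f (x + t • z) z - fderiv ℝ f x z) t := by
      intro t
      have h := ((hp1 t).sub_const (f x)).sub ((hasDerivAt_id t).mul_const (fderiv ℝ f x z))
      rw [one_mul] at h
      exact h
    have hB : ∀ t : ℝ, HasDerivAt (fun t : ℝ => H * t ^ 2 / 2) (H * t) t := by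
      intro t
      have := ((hasDerivAt_pow 2 t).const_mul H).div_const 2
      have e : H * (((2 : ℕ) : ℝ) * t ^ (2 - 1)) / 2 = H * t := by
        norm_num
        ring
      rw [e] at this
      exact this
    have := image_norm_le_of_norm_deriv_right_le_deriv_boundary (a := 0) (b := δ)
      (fun t _ => (hg t).continuousAt.continuousWithinAt)
      (fun t _ => (hg t).hasDerivWithinAt) (B := fun t : ℝ => H * t ^ 2 / 2)
      (by simp) hB (fun t ht => hlip t ht.1)
      (x := δ) ⟨hδ0.le, le_rfl⟩
    simpa using this
  have hgrad : ⟪z, gradient f x⟫ = fderiv ℝ f x z := by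
    rw [real_inner_comm, gradient, InnerProductSpace.toDual_symm_apply]
  rw [hgrad]
  have hs : Real.sqrt (σ * H) = H * δ / 2 := by
    rw [Real.sqrt_eq_iff_mul_self_eq (by positivity) (by positivity), hδ]
    have := Real.mul_self_sqrt (show 0 ≤ σ / H by positivity)
    have e : H * (2 * √(σ / H)) / 2 * (H * (2 * √(σ / H)) / 2)
      = H ^ 2 * (√(σ / H) * √(σ / H)) := by ring
    rw [e, this]
    field_simp
  have hσδ : 4 * σ = H * δ ^ 2 := by
    have := Real.mul_self_sqrt (show 0 ≤ σ * H by positivity)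
    rw [hs] at this
    have : H * (4 * σ) = H * (H * δ ^ 2) := by linarith
    exact mul_left_cancel₀ hH.ne' this
  rw [hs]
  have e : (Ef (x + δ • z) - Ef x) / δ - fderiv ℝ f x z
      = (Ef (x + δ • z) - Ef x - δ * fderiv ℝ f x z) / δ := by field_simp
  rw [e, abs_div, abs_of_pos hδ0, div_le_iff₀ hδ0]
  have h1 := abs_le.1 (hnoise (x + δ • z))
  have h2 := abs_le.1 (hnoise x)
  have h3 := abs_le.1 hT
  rw [abs_le]
  constructor <;> nlinarith [h1.1, h1.2, h2.1, h2.2, h3.1, h3.2]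
end

section
/- Let f : ℝ^n → ℝ be twice continuously differentiable with Σ_{i,k} |∂²f/∂x_i∂x_k(y)| ≤ H for all y ∈ ℝ^n, where H > 0, and let E_f : ℝ^n → ℝ satisfy |E_f(y) − f(y)| ≤ σ for all y, where σ > 0. Fix x ∈ ℝ^n, sign vectors z₁,…,z_m ∈ {−1, +1}^n, and δ = 2√(σ/H). Define y ∈ ℝ^m by y_i = (E_f(x + δz_i) − E_f(x))/(√m · δ), and let Z ∈ ℝ^{m×n} be the matrix whose i-th row is z_i^⊤/√m. Then ‖y − Z∇f(x)‖₂ ≤ 2√(σH). -/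
lemma bilin_bound {n : ℕ}
    (B : EuclideanSpace ℝ (Fin n) →L[ℝ] EuclideanSpace ℝ (Fin n) →L[ℝ] ℝ) (H : ℝ)
    (hB : ∑ i : Fin n, ∑ k : Fin n,
      |B (EuclideanSpace.single i 1) (EuclideanSpace.single k 1)| ≤ H)
    (z : EuclideanSpace ℝ (Fin n)) (hz : ∀ k, z k = 1 ∨ z k = -1) : |B z z| ≤ H := by
  have hzs : z = ∑ k, z k • EuclideanSpace.single k (1 : ℝ) := by
    ext j
    simp [Finset.sum_apply, Pi.single_apply]
  have habs : ∀ k, |z k| = 1 := fun k => by rcases hz k with h | h <;> simp [h]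
  have key : B z z = ∑ i, ∑ k, z i * (z k *
      B (EuclideanSpace.single i 1) (EuclideanSpace.single k 1)) := by
    conv_lhs => rw [hzs]
    simp only [map_sum, map_smul, sum_apply, smul_apply,
      smul_eq_mul, Finset.mul_sum]
    rw [Finset.sum_comm]
    refine Finset.sum_congr rfl fun i _ => Finset.sum_congr rfl fun k _ => ?_
    ring
  rw [key]
  refine le_trans (Finset.abs_sum_le_sum_abs _ _) (le_trans (Finset.sum_le_sum fun i _ => ?_) hB)
  refine le_trans (Finset.abs_sum_le_sum_abs _ _) (Finset.sum_le_sum fun k _ => ?_)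
  rw [abs_mul, abs_mul, habs, habs, one_mul, one_mul]

lemma taylor_bound {n : ℕ} (f : EuclideanSpace ℝ (Fin n) → ℝ) (H : ℝ)
    (hf : ContDiff ℝ 2 f) (x z : EuclideanSpace ℝ (Fin n))
    (hb : ∀ y, |fderiv ℝ (fderiv ℝ f) y z z| ≤ H) (δ : ℝ) (hδ : 0 ≤ δ) :
    |f (x + δ • z) - f x - δ * fderiv ℝ f x z| ≤ H * δ ^ 2 / 2 := by
  have hf1 : Differentiable ℝ f := hf.differentiable (by norm_num)
  have hf2 : Differentiable ℝ (fderiv ℝ f) :=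
    (hf.fderiv_right (m := 1) (by norm_num)).differentiable (by norm_num)
  have hline : ∀ t : ℝ, HasDerivAt (fun t : ℝ => x + t • z) z t := fun t => by
    simpa using ((hasDerivAt_id t).smul_const z).const_add x
  have hg : ∀ t : ℝ, HasDerivAt (fun t : ℝ => f (x + t • z)) (fderiv ℝ f (x + t • z) z) t :=
    fun t => (hf1 _).hasFDerivAt.comp_hasDerivAt t (hline t)
  have hg' : ∀ t : ℝ, HasDerivAt (fun t : ℝ => fderiv ℝ f (x + t • z) z)
      (fderiv ℝ (fderiv ℝ f) (x + t • z) z z) t := fun t => by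
    have h := (hf2 (x + t • z)).hasFDerivAt.comp_hasDerivAt t (hline t)
    simpa using h.clm_apply (hasDerivAt_const t z)
  have h1 : ∀ t ∈ Set.Icc 0 δ, ‖fderiv ℝ f (x + t • z) z - fderiv ℝ f x z‖ ≤ H * t := by
    intro t ht
    have := norm_image_sub_le_of_norm_deriv_le_segment' (a := 0) (b := δ) (C := H)
      (fun t _ => (hg' t).hasDerivWithinAt) (fun t _ => hb _) t ht
    simpa using this
  have h2 := image_norm_le_of_norm_deriv_right_le_deriv_boundary (a := 0) (b := δ)
    (f := fun t : ℝ => f (x + t • z) - f x - t * fderiv ℝ f x z)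
    (f' := fun t : ℝ => fderiv ℝ f (x + t • z) z - fderiv ℝ f x z)
    (B := fun t => H * t ^ 2 / 2) (B' := fun t => H * t)
    (fun t _ => ContinuousAt.continuousWithinAt <| HasDerivAt.continuousAt <| by
      exact ((hg t).sub_const (f x)).sub ((hasDerivAt_id t).mul_const (fderiv ℝ f x z)))
    (fun t _ => HasDerivAt.hasDerivWithinAt <| by
      have := ((hg t).sub_const (f x)).sub ((hasDerivAt_id t).mul_const (fderiv ℝ f x z))
      rw [one_mul] at this
      exact this)
    (by simp)
    (fun t => by
      have := (((hasDerivAt_id t).pow 2).const_mul H).div_const 2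
      refine HasDerivAt.congr_deriv (f := fun t => H * t ^ 2 / 2) this ?_
      simp only [id]
      norm_num
      ring)
    (fun t ht => h1 t ⟨ht.1, ht.2.le⟩)
  exact h2 ⟨hδ, le_refl δ⟩

/-- aggregate measurement-error bound for the compressed-sensing linear
system `y ≈ Z ∇f(x)` used by the block gradient estimator, Algorithm 1.
Let `f : ℝⁿ → ℝ` be twice continuously differentiable with element-wise ℓ₁-norm of the
Hessian bounded by `H > 0` everywhere, and `E_f` a noisy oracle with `|E_f y - f y| ≤ σ`,
`σ > 0`.  Fix sign vectors `z₁, …, z_m ∈ {-1,+1}ⁿ` and `δ = 2√(σ/H)`.  With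
`y i = (E_f(x + δ zᵢ) - E_f x)/(√m δ)` and `Z` the matrix with rows `zᵢᵀ/√m`,
`‖y - Z ∇f(x)‖₂ ≤ 2 √(σ H)`. -/
theorem measurement_error_bound
    (n m : ℕ) (f Ef : EuclideanSpace ℝ (Fin n) → ℝ) (H σ : ℝ) (hH : 0 < H) (hσ : 0 < σ)
    (hf : ContDiff ℝ 2 f)
    (hHess : ∀ y : EuclideanSpace ℝ (Fin n),
      ∑ i : Fin n, ∑ k : Fin n,
        |iteratedFDeriv ℝ 2 f y ![EuclideanSpace.single i 1, EuclideanSpace.single k 1]| ≤ H)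
    (hnoise : ∀ y, |Ef y - f y| ≤ σ)
    (x : EuclideanSpace ℝ (Fin n))
    (z : Fin m → EuclideanSpace ℝ (Fin n)) (hz : ∀ i k, z i k = 1 ∨ z i k = -1)
    (δ : ℝ) (hδ : δ = 2 * Real.sqrt (σ / H))
    (y : Fin m → ℝ)
    (hy : ∀ i, y i = (Ef (x + δ • z i) - Ef x) / (Real.sqrt m * δ))
    (Z : Matrix (Fin m) (Fin n) ℝ)
    (hZ : ∀ i k, Z i k = z i k / Real.sqrt m) :
    Real.sqrt (∑ i : Fin m, (y i - ∑ k : Fin n, Z i k * gradient f x k) ^ 2) ≤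
      2 * Real.sqrt (σ * H) := by
  have hδ0 : 0 < δ := by rw [hδ]; positivity
  have hδ2 : H * δ ^ 2 = 4 * σ := by
    rw [hδ, mul_pow, Real.sq_sqrt (by positivity)]
    field_simp
    norm_num
  have hB : ∀ i w, |fderiv ℝ (fderiv ℝ f) w (z i) (z i)| ≤ H := fun i w => by
    refine bilin_bound _ H ?_ (z i) (hz i)
    simpa [iteratedFDeriv_two_apply] using hHess w
  have hgrad : ∀ i, fderiv ℝ f x (z i) = ∑ k, z i k * gradient f x k := fun i => by
    have h : inner ℝ (gradient f x) (z i) = fderiv ℝ f x (z i) := by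
      simp [gradient]
    rw [← h, PiLp.inner_apply]
    simp
  have hterm : ∀ i, (y i - ∑ k : Fin n, Z i k * gradient f x k) ^ 2 ≤ 4 * (σ * H) / m := by
    intro i
    have hm : (0 : ℝ) < m := by exact_mod_cast (Fin.pos i)
    have hsm : 0 < Real.sqrt m := Real.sqrt_pos.2 hm
    have e : y i - ∑ k : Fin n, Z i k * gradient f x k =
        (Ef (x + δ • z i) - Ef x - δ * fderiv ℝ f x (z i)) / (Real.sqrt m * δ) := by
      have : ∑ k : Fin n, Z i k * gradient f x k = fderiv ℝ f x (z i) / Real.sqrt m := by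
        rw [hgrad, Finset.sum_div]
        refine Finset.sum_congr rfl fun k _ => ?_
        rw [hZ]; ring
      rw [this, hy]
      field_simp
    have hnum : |Ef (x + δ • z i) - Ef x - δ * fderiv ℝ f x (z i)| ≤ 4 * σ := by
      have t := abs_le.1 (taylor_bound f H hf x (z i) (hB i) δ hδ0.le)
      have a := abs_le.1 (hnoise (x + δ • z i))
      have b := abs_le.1 (hnoise x)
      rw [abs_le]
      constructor <;> linarith [t.1, t.2, a.1, a.2, b.1, b.2]
    have hsq := sq_le_sq' (abs_le.1 hnum).1 (abs_le.1 hnum).2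
    rw [e, div_pow, mul_pow, Real.sq_sqrt hm.le, div_le_div_iff₀ (by positivity) hm]
    have : 4 * (σ * H) * (m * δ ^ 2) = (4 * σ) ^ 2 * m := by
      linear_combination (4 * σ * m) * hδ2
    rw [this]
    exact mul_le_mul_of_nonneg_right hsq hm.le
  have hsum : ∑ i : Fin m, (y i - ∑ k : Fin n, Z i k * gradient f x k) ^ 2 ≤ 4 * (σ * H) := by
    refine le_trans (Finset.sum_le_sum fun i _ => hterm i) ?_
    rw [Finset.sum_const, Finset.card_univ, Fintype.card_fin, nsmul_eq_mul]
    rcases Nat.eq_zero_or_pos m with h | h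
    · subst h
      simp
      positivity
    · have hm : (0 : ℝ) < m := by exact_mod_cast h
      rw [mul_div_cancel₀ _ hm.ne']
  rw [Real.sqrt_le_left (by positivity), mul_pow, Real.sq_sqrt (by positivity)]
  linarith
end
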